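/- arXiv:2103.14436 — 2 statements merged into one kernel-verified Lean document; each statement's English description precedes it below -/
import Mathlib

section
/- Let PG_n and CG_n denote the path graph and the cycle graph on n vertices, both with unit edge weights. Then the partition function of CG_n satisfies, for all q>0: Z_{CG_n}(q) = Z_{PG_n}(q) + (2/q)·[ Z_{PG_n}(q) − Z_{PG_{n−1}}(q) ] − 2, and moreover Z_{CG_n}(q) = ∑_{k=1}^{n} ( C(n+k, 2k) + C(n+k−1, 2k) )·q^k, where C(a,b) denotes the binomial coefficient. -/
open Classical Finset

noncomputable section

/-- The graph Laplacian `L = A - D` of the weighted directed graph with edge relation `E`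
and weights `w`: `A x y = w x y · 1_{E x y, x ≠ y}` and `D` is the diagonal matrix of
total outgoing weights. -/
def lapOf {V : Type*} [Fintype V] [DecidableEq V] (E : V → V → Prop) (w : V → V → ℝ) :
    Matrix V V ℝ := fun x y =>
  (if E x y ∧ x ≠ y then w x y else 0) -
    (if x = y then ∑ z : V, (if E x z ∧ x ≠ z then w x z else 0) else 0)

/-- The partition function `Z(q) = det (q·I - L)` (matrix-forest theorem). -/
def Zdet {V : Type*} [Fintype V] [DecidableEq V] (E : V → V → Prop) (w : V → V → ℝ)
    (q : ℝ) : ℝ := (q • (1 : Matrix V V ℝ) - lapOf E w).det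

/-- The path graph on `n` vertices: `i` and `i+1` are adjacent. -/
def pathAdj (n : ℕ) : Fin n → Fin n → Prop := fun i j =>
  (i : ℕ) + 1 = (j : ℕ) ∨ (j : ℕ) + 1 = (i : ℕ)

/-- The cycle graph on `n` vertices: `i` and `i+1 (mod n)` are adjacent. -/
def cycAdj (n : ℕ) : Fin n → Fin n → Prop := fun i j =>
  i ≠ j ∧ ((j : ℕ) = ((i : ℕ) + 1) % n ∨ (i : ℕ) = ((j : ℕ) + 1) % n)

/-!
Write `x = q + 2` and let `Δ = -L` so that `Z(q) = det (q + Δ)`.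

For the path, `q + Δ` is tridiagonal with diagonal `x` except for `x - 1` at the two ends, and
expanding along the first row gives the Chebyshev recurrence; hence `Z_{PG_n}(q) = q S_{n-1}(x)`.

For the cycle, `q + Δ = x - P - Pᵀ` with `P` the cyclic shift. Write `x = z + w` with `z w = 1` in
an extension ring. As `P Pᵀ = 1`, the matrix factors as `(z - P)(1 - w Pᵀ)`, with determinant
`(zⁿ - 1)(1 - wⁿ) = zⁿ + wⁿ - 2`; hence `Z_{CG_n}(q) = C_n(x) - 2`.

The first identity is then `C_n = X S_{n-1} - 2 S_{n-2}`, and the second is the expansion of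
`C_n(q + 2)` in powers of `q`.
-/

open Matrix Polynomial SimpleGraph

section Chebyshev

variable (R : Type*) [CommRing R]

lemma chebyshevC_add_two (n : ℤ) :
    Chebyshev.C R (n + 2) = X * Chebyshev.S R (n + 1) - 2 * Chebyshev.S R n := by
  have mixed := Chebyshev.S_eq_X_mul_S_add_C R (n + 1)
  rw [add_assoc, one_add_one_eq_two] at mixed
  linear_combination 2 * Chebyshev.S_add_two R n - mixed

lemma coeff_chebyshevS_comp_X_add_two_and_sub (n : ℕ) :
    (∀ k, ((Chebyshev.S R n).comp (X + 2)).coeff k = (n + 1 + k).choose (2 * k + 1)) ∧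
    ∀ k, ((Chebyshev.S R n - Chebyshev.S R (n - 1)).comp (X + 2)).coeff k =
      (n + k).choose (2 * k) := by
  induction n with
  | zero =>
    constructor <;> rintro (_ | k)
    · simp
    · simp [coeff_one, Nat.choose_eq_zero_of_lt (show 1 + (k + 1) < 2 * (k + 1) + 1 by omega)]
    · simp
    · simp [coeff_one, Nat.choose_eq_zero_of_lt (show k + 1 < 2 * (k + 1) by omega)]
  | succ n ih =>
    obtain ⟨ihS, ih_sub⟩ := ih
    have sub_succ (k : ℕ) : ((Chebyshev.S R (n + 1 : ℕ) - Chebyshev.S R ((n + 1 : ℕ) - 1)).comp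
        (X + 2)).coeff k = (n + 1 + k).choose (2 * k) := by
      have recurrence :
          (Chebyshev.S R (n + 1 : ℕ) - Chebyshev.S R ((n + 1 : ℕ) - 1)).comp (X + 2) =
          X * (Chebyshev.S R n).comp (X + 2) +
            (Chebyshev.S R n - Chebyshev.S R (n - 1)).comp (X + 2) := by
        rw [Nat.cast_succ, add_sub_cancel_right, Chebyshev.S_add_one]
        simp only [sub_comp, mul_comp, X_comp]
        ring
      rw [recurrence, coeff_add, ih_sub]
      cases k with
      | zero => simp
      | succ k =>
        rw [coeff_X_mul, ihS, ← Nat.cast_add]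
        exact congrArg _ (by grind [Nat.choose_succ_succ' (n + 1 + k) (2 * k + 1)])
    refine ⟨fun k ↦ ?_, sub_succ⟩
    rw [← sub_add_cancel (Chebyshev.S R (n + 1 : ℕ)) (Chebyshev.S R ((n + 1 : ℕ) - 1)), add_comp,
      coeff_add, sub_succ, Nat.cast_succ, add_sub_cancel_right, ihS, ← Nat.cast_add]
    exact congrArg _ (by grind [Nat.choose_succ_succ' (n + 1 + k) (2 * k)])

lemma chebyshevC_comp_X_add_two_sub_two (n : ℕ) :
    (Chebyshev.C R (n + 1)).comp (X + 2) - 2 = ∑ k ∈ Finset.Icc 1 (n + 1),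
      C (((n + 1 + k).choose (2 * k) : R) + (n + k).choose (2 * k)) * X ^ k := by
  have split : Chebyshev.C R (n + 1) = (Chebyshev.S R (n + 1 : ℕ) -
      Chebyshev.S R ((n + 1 : ℕ) - 1)) + (Chebyshev.S R n - Chebyshev.S R (n - 1)) := by
    rw [Chebyshev.C_eq_S_sub_X_mul_S, Nat.cast_succ, add_sub_cancel_right]
    linear_combination Chebyshev.S_add_one R n
  ext k
  simp only [split, add_comp, coeff_sub, coeff_add, finsetSum_coeff, coeff_C_mul_X_pow,
    (coeff_chebyshevS_comp_X_add_two_and_sub R _).2, Finset.sum_ite_eq, Finset.mem_Icc]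
  rcases k with - | k
  · norm_num
  · split_ifs with h
    · simp
    · simp [Nat.choose_eq_zero_of_lt (show n + 1 + (k + 1) < 2 * (k + 1) by omega),
        Nat.choose_eq_zero_of_lt (show n + (k + 1) < 2 * (k + 1) by omega)]

lemma eval_add_two_chebyshevC_sub_two (n : ℕ) (x : R) :
    (Chebyshev.C R (n + 1)).eval (x + 2) - 2 = ∑ k ∈ Finset.Icc 1 (n + 1),
      (((n + 1 + k).choose (2 * k) : R) + (n + k).choose (2 * k)) * x ^ k := by
  simpa [eval_finsetSum] using congrArg (eval x) (chebyshevC_comp_X_add_two_sub_two R n)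

end Chebyshev

section Rotation

variable {R : Type*} [CommRing R]

lemma finRotate_apply_eq_iff {n : ℕ} {i j : Fin (n + 1)} :
    finRotate (n + 1) i = j ↔ (i : ℕ) = n ∧ (j : ℕ) = 0 ∨ (i : ℕ) + 1 = j := by
  simp only [Fin.ext_iff, coe_finRotate, Fin.val_last]
  split_ifs <;> omega

lemma det_smul_one_sub_smul_permMatrix_finRotate (n : ℕ) (a b : R) :
    (a • (1 : Matrix (Fin (n + 1)) (Fin (n + 1)) R) -
      b • (finRotate (n + 1)).permMatrix R).det = a ^ (n + 1) - b ^ (n + 1) := by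
  set M := a • (1 : Matrix (Fin (n + 1)) (Fin (n + 1)) R) - b • (finRotate (n + 1)).permMatrix R
  have entry (i j : Fin (n + 1)) : M i j = (if (i : ℕ) = j then a else 0) -
      if (i : ℕ) = n ∧ (j : ℕ) = 0 ∨ (i : ℕ) + 1 = j then b else 0 := by
    simp only [M, Matrix.sub_apply, Matrix.smul_apply, Matrix.one_apply, smul_eq_mul, mul_ite,
      mul_one, mul_zero, PEquiv.toMatrix_apply, Equiv.toPEquiv_apply, Option.mem_some_iff,
      finRotate_apply_eq_iff]
    simp only [Fin.ext_iff]
  have minor_zero : (M.submatrix (Fin.succAbove 0) Fin.succ).det = a ^ n := by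
    rw [det_of_isUpperTriangular]
    · simp [entry]
    · intro i j (hij : (j : ℕ) < i)
      simp only [entry, submatrix_apply, Fin.succAbove_zero, Fin.val_succ]
      grind
  have minor_last : (M.submatrix (Fin.last n).succAbove Fin.succ).det = (-b) ^ n := by
    rw [det_of_isLowerTriangular]
    · simp [entry]
    · intro i j (hij : (i : ℕ) < j)
      simp only [entry, submatrix_apply, Fin.succAbove_last, Fin.val_castSucc, Fin.val_succ]
      grind
  have column_zero (i : Fin (n + 1)) :
      M i 0 = (if i = 0 then a else 0) - if i = Fin.last n then b else 0 := by
    grind [Fin.val_zero]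
  have sign : (-1 : R) ^ n * (-b) ^ n = b ^ n := by rw [← mul_pow, neg_one_mul, neg_neg]
  simp only [det_succ_column_zero, column_zero, mul_sub, sub_mul, mul_ite, ite_mul, mul_zero,
    zero_mul, Finset.sum_sub_distrib, Finset.sum_ite_eq', Finset.mem_univ, if_true, minor_zero,
    minor_last, Fin.val_zero, Fin.val_last]
  linear_combination -b * sign

lemma det_smul_one_sub_permMatrix_finRotate_sub_transpose_of_mul_eq_one (n : ℕ) {z w : R}
    (hzw : z * w = 1) :
    ((z + w) • (1 : Matrix (Fin (n + 1)) (Fin (n + 1)) R) -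
      ((finRotate (n + 1)).permMatrix R + ((finRotate (n + 1)).permMatrix R)ᵀ)).det =
      z ^ (n + 1) + w ^ (n + 1) - 2 := by
  set P := (finRotate (n + 1)).permMatrix R
  have orthogonal : P * Pᵀ = 1 := by
    rw [transpose_permMatrix, ← permMatrix_mul, inv_mul_cancel, permMatrix_one]
  have factor : (z + w) • (1 : Matrix (Fin (n + 1)) (Fin (n + 1)) R) - (P + Pᵀ) =
      (z • 1 - (1 : R) • P) * ((1 : R) • 1 - w • P)ᵀ := by
    simp only [transpose_sub, transpose_smul, transpose_one, sub_mul, mul_sub, smul_mul_smul_comm,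
      orthogonal, one_mul, mul_one, hzw]
    module
  have inverse_pow : z ^ (n + 1) * w ^ (n + 1) = 1 := by rw [← mul_pow, hzw, one_pow]
  rw [factor, det_mul, det_transpose, det_smul_one_sub_smul_permMatrix_finRotate,
    det_smul_one_sub_smul_permMatrix_finRotate]
  linear_combination -inverse_pow

lemma exists_injective_ringHom_mul_eq_one_add_eq.{u} {R : Type u} [CommRing R] [Nontrivial R]
    (x : R) :
    ∃ (S : Type u) (_ : CommRing S) (f : R →+* S) (z w : S),
      Function.Injective f ∧ z * w = 1 ∧ z + w = f x := by
  have monic : (X ^ 2 - C x * X + 1).Monic := by monicity!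
  obtain ⟨S, _, _, _, _, _, splits⟩ := monic.exists_splits_map
  obtain ⟨z, hz⟩ := splits.exists_eval_eq_zero (by
    rw [monic.degree_map, show (X ^ 2 - C x * X + 1 : R[X]).degree = 2 by compute_degree!]
    decide)
  refine ⟨S, ‹_›, algebraMap R S, z, algebraMap R S x - z,
    FaithfulSMul.algebraMap_injective R S, ?_, by ring⟩
  simp only [Polynomial.map_add, Polynomial.map_sub, Polynomial.map_pow, map_X,
    Polynomial.map_mul, map_C, Polynomial.map_one, eval_add, eval_sub, eval_pow, eval_X, eval_mul,
    eval_C, eval_one] at hz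
  linear_combination -hz

lemma det_smul_one_sub_permMatrix_finRotate_sub_transpose (n : ℕ) (x : R) :
    (x • (1 : Matrix (Fin (n + 1)) (Fin (n + 1)) R) -
      ((finRotate (n + 1)).permMatrix R + ((finRotate (n + 1)).permMatrix R)ᵀ)).det =
      (Chebyshev.C R (n + 1)).eval x - 2 := by
  nontriviality R
  obtain ⟨S, _, f, z, w, hf, hzw, hx⟩ := exists_injective_ringHom_mul_eq_one_add_eq x
  apply hf
  have map_eval : f ((Chebyshev.C R (n + 1)).eval x) = z ^ (n + 1) + w ^ (n + 1) := by
    rw [← dickson_one_one_eval_add_inv z w hzw, dickson_one_one_eq_chebyshev_C, hx,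
      ← Chebyshev.map_C f, eval_map_apply]
    simp
  rw [map_sub, map_ofNat, map_eval, RingHom.map_det,
    ← det_smul_one_sub_permMatrix_finRotate_sub_transpose_of_mul_eq_one n hzw]
  congr 1
  ext i j
  simp [hx, PEquiv.toMatrix_apply, Matrix.one_apply, apply_ite f]

end Rotation

section Path

variable {R : Type*} [CommRing R]

/-- The tridiagonal matrix with diagonal `d` and entries `-1` next to the diagonal. The diagonal is
left free because expanding the determinant of `q + Δ` for a path yields minors that are no longer
of the form `q + Δ` for a shorter path. -/
def pathTridiagonal {n : ℕ} (d : Fin n → R) : Matrix (Fin n) (Fin n) R :=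
  diagonal d - (pathGraph n).adjMatrix R

lemma det_pathTridiagonal_add_two {n : ℕ} (d : Fin (n + 2) → R) :
    (pathTridiagonal d).det = d 0 * (pathTridiagonal fun i : Fin (n + 1) ↦ d i.succ).det -
      (pathTridiagonal fun i : Fin n ↦ d i.succ.succ).det := by
  have minor₀ : (pathTridiagonal d).submatrix Fin.succ (Fin.succAbove 0) =
      pathTridiagonal fun i : Fin (n + 1) ↦ d i.succ := by
    ext i j
    simp [pathTridiagonal, pathGraph_adj, diagonal_apply]
  have minor₁ : ((pathTridiagonal d).submatrix Fin.succ (Fin.succAbove 1)).det =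
      -(pathTridiagonal fun i : Fin n ↦ d i.succ.succ).det := by
    have minor₀₁ : ((pathTridiagonal d).submatrix Fin.succ (Fin.succAbove 1)).submatrix
        (Fin.succAbove 0) Fin.succ = pathTridiagonal fun i : Fin n ↦ d i.succ.succ := by
      ext i j
      have : (1 : Fin (n + 2)).succAbove j.succ = j.succ.succ :=
        Fin.succAbove_of_lt_succ _ _ (by simp [Fin.lt_def])
      simp [pathTridiagonal, pathGraph_adj, diagonal_apply, this]
    rw [det_succ_column_zero, Fin.sum_univ_succ, minor₀₁, Finset.sum_eq_zero, add_zero]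
    · simp [pathTridiagonal, pathGraph_adj]
    · simp [pathTridiagonal, pathGraph_adj, Fin.ext_iff]
  rw [det_succ_row_zero, Fin.sum_univ_succ, Fin.sum_univ_succ, Fin.succ_zero_eq_one, minor₀,
    minor₁, Finset.sum_eq_zero]
  · have diag : pathTridiagonal d 0 0 = d 0 := by simp [pathTridiagonal]
    have off_diag : pathTridiagonal d 0 1 = -1 := by simp [pathTridiagonal, pathGraph_adj]
    simp only [diag, off_diag, Fin.val_zero, Fin.val_one, pow_zero, pow_one]
    ring
  · simp [pathTridiagonal, pathGraph_adj, Fin.ext_iff]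

lemma det_pathTridiagonal_sub_one_last (n : ℕ) (x : R) :
    (pathTridiagonal fun i : Fin n ↦ if (i : ℕ) + 1 = n then x - 1 else x).det =
      (Chebyshev.S R n - Chebyshev.S R (n - 1)).eval x := by
  induction n using Nat.twoStepInduction with
  | zero => simp
  | one => simp [pathTridiagonal]
  | more n ih ih_succ =>
    have recurrence : Chebyshev.S R (n + 2 : ℕ) - Chebyshev.S R ((n + 2 : ℕ) - 1) =
        X * (Chebyshev.S R (n + 1 : ℕ) - Chebyshev.S R ((n + 1 : ℕ) - 1)) -
          (Chebyshev.S R n - Chebyshev.S R (n - 1)) := by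
      rw [show ((n + 2 : ℕ) : ℤ) - 1 = n + 1 by push_cast; ring]
      push_cast
      rw [add_sub_cancel_right]
      linear_combination Chebyshev.S_add_two R n - Chebyshev.S_add_one R n
    rw [recurrence, eval_sub, eval_mul, eval_X, ← ih, ← ih_succ, det_pathTridiagonal_add_two]
    simp

lemma degree_pathGraph (n : ℕ) (i : Fin n) : (pathGraph n).degree i =
    (if 0 < (i : ℕ) then 1 else 0) + if (i : ℕ) + 1 < n then 1 else 0 := by
  have sum_eq (k : ℕ) : ∑ j : Fin n, (if k = j then 1 else 0) = if k < n then 1 else 0 := by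
    simp [Fin.sum_univ_eq_sum_range (fun j ↦ if k = j then 1 else 0)]
  have split (j : Fin n) : (if (pathGraph n).Adj i j then 1 else 0) =
      (if 0 < (i : ℕ) then if (i : ℕ) - 1 = j then 1 else 0 else 0) +
        if (i : ℕ) + 1 = j then 1 else 0 := by
    rw [pathGraph_adj]
    split_ifs <;> omega
  have pred_lt : (i : ℕ) - 1 < n := by omega
  have degree_eq := degree_eq_sum_if_adj (R := ℕ) (pathGraph n) i
  rw [Nat.cast_id] at degree_eq
  rw [degree_eq]
  simp only [split, Finset.sum_add_distrib, Finset.sum_ite_irrel, Finset.sum_const_zero, sum_eq,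
    pred_lt, if_true]

lemma det_smul_one_add_lapMatrix_pathGraph (n : ℕ) (q : R) :
    (q • (1 : Matrix (Fin (n + 1)) (Fin (n + 1)) R) + (pathGraph (n + 1)).lapMatrix R).det =
      q * (Chebyshev.S R n).eval (q + 2) := by
  have : q • (1 : Matrix (Fin (n + 1)) (Fin (n + 1)) R) + (pathGraph (n + 1)).lapMatrix R =
      pathTridiagonal fun i ↦ q + (pathGraph (n + 1)).degree i := by
    rw [lapMatrix, degMatrix, smul_one_eq_diagonal, ← add_sub_assoc, diagonal_add, pathTridiagonal]
  rw [this]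
  cases n with
  | zero => simp [pathTridiagonal]
  | succ n =>
    have degree_zero : q + (pathGraph (n + 2)).degree 0 = q + 1 := by simp [degree_pathGraph]
    have degree_succ (i : Fin (n + 1)) : q + (pathGraph (n + 2)).degree i.succ =
        if (i : ℕ) + 1 = n + 1 then q + 2 - 1 else q + 2 := by
      rw [degree_pathGraph, Fin.val_succ]
      split_ifs <;> first | omega | (push_cast; ring)
    have degree_succ_succ (i : Fin n) : q + (pathGraph (n + 2)).degree i.succ.succ =
        if (i : ℕ) + 1 = n then q + 2 - 1 else q + 2 := by
      simp only [degree_succ, Fin.val_succ, add_left_inj]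
    have S_succ := congrArg (eval (q + 2)) (Chebyshev.S_add_one R n)
    simp only [eval_sub, eval_mul, eval_X] at S_succ
    rw [det_pathTridiagonal_add_two]
    simp only [degree_zero, degree_succ_succ]
    simp only [degree_succ, det_pathTridiagonal_sub_one_last, Nat.cast_succ, add_sub_cancel_right,
      eval_sub]
    linear_combination S_succ

end Path

section Cycle

variable {R : Type*} [CommRing R]

lemma adjMatrix_cycleGraph (n : ℕ) : (cycleGraph (n + 3)).adjMatrix R =
    (finRotate (n + 3)).permMatrix R + ((finRotate (n + 3)).permMatrix R)ᵀ := by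
  ext i j
  have not_both : ¬(i + 1 = j ∧ j + 1 = i) := by
    rintro ⟨rfl, h⟩
    simp [add_assoc, Fin.ext_iff, Fin.val_add, Nat.mod_eq_of_lt] at h
  simp only [adjMatrix_apply, cycleGraph_adj, sub_eq_iff_eq_add, Matrix.add_apply, transpose_apply,
    PEquiv.toMatrix_apply, Equiv.toPEquiv_apply, Option.mem_some_iff, finRotate_apply]
  grind

lemma det_smul_one_add_lapMatrix_cycleGraph (n : ℕ) (q : R) :
    (q • (1 : Matrix (Fin (n + 3)) (Fin (n + 3)) R) + (cycleGraph (n + 3)).lapMatrix R).det =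
      (Chebyshev.C R (n + 3)).eval (q + 2) - 2 := by
  have : q • (1 : Matrix (Fin (n + 3)) (Fin (n + 3)) R) + (cycleGraph (n + 3)).lapMatrix R =
      (q + 2) • 1 - (cycleGraph (n + 3)).adjMatrix R := by
    ext i j
    simp only [lapMatrix, degMatrix, cycleGraph_degree_three_le, Nat.cast_ofNat, Matrix.add_apply,
      Matrix.smul_apply, Matrix.one_apply, smul_eq_mul, mul_ite, mul_one, mul_zero,
      Matrix.sub_apply, diagonal_apply, adjMatrix_apply]
    split_ifs <;> ring
  rw [this, adjMatrix_cycleGraph, det_smul_one_sub_permMatrix_finRotate_sub_transpose]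
  norm_num [add_assoc]

end Cycle

lemma pathAdj_eq (n : ℕ) : pathAdj n = (pathGraph n).Adj := by
  ext i j
  rw [pathGraph_adj, pathAdj]

lemma cycAdj_eq (n : ℕ) : cycAdj (n + 2) = (cycleGraph (n + 2)).Adj := by
  ext i j
  have val_eq_succ_mod_iff (i j : Fin (n + 2)) : (j : ℕ) = (i + 1) % (n + 2) ↔ j - i = 1 := by
    rw [sub_eq_iff_eq_add', Fin.ext_iff, Fin.val_add, Fin.val_one]
  rw [cycAdj, val_eq_succ_mod_iff, val_eq_succ_mod_iff, or_comm, ← cycleGraph_adj]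
  exact and_iff_right_of_imp Adj.ne

lemma Zdet_adj {V : Type*} [Fintype V] [DecidableEq V] (G : SimpleGraph V) [DecidableRel G.Adj]
    (q : ℝ) :
    Zdet G.Adj (fun _ _ ↦ 1) q = (q • (1 : Matrix V V ℝ) + G.lapMatrix ℝ).det := by
  have lapOf_adj : lapOf G.Adj (fun _ _ ↦ 1) = -G.lapMatrix ℝ := by
    have adj_ne (x y : V) : G.Adj x y ∧ x ≠ y ↔ G.Adj x y := and_iff_left_of_imp Adj.ne
    ext i j
    simp only [lapOf, adj_ne, lapMatrix, degMatrix, Matrix.neg_apply, Matrix.sub_apply,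
      diagonal_apply, degree_eq_sum_if_adj, adjMatrix_apply, neg_sub]
  rw [Zdet, lapOf_adj, sub_neg_eq_add]

lemma Zdet_pathAdj_succ (n : ℕ) (q : ℝ) :
    Zdet (pathAdj (n + 1)) (fun _ _ ↦ 1) q = q * (Chebyshev.S ℝ n).eval (q + 2) := by
  rw [pathAdj_eq, Zdet_adj, det_smul_one_add_lapMatrix_pathGraph]

lemma Zdet_cycAdj_add_three (n : ℕ) (q : ℝ) :
    Zdet (cycAdj (n + 3)) (fun _ _ ↦ 1) q = (Chebyshev.C ℝ (n + 3)).eval (q + 2) - 2 := by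
  rw [cycAdj_eq, Zdet_adj, det_smul_one_add_lapMatrix_cycleGraph]

theorem cycle_partition_general (n : ℕ) (hn : 3 ≤ n) (q : ℝ) (hq : q ≠ 0) :
    Zdet (cycAdj n) (fun _ _ => (1 : ℝ)) q =
      Zdet (pathAdj n) (fun _ _ => (1 : ℝ)) q +
        (2 / q) * (Zdet (pathAdj n) (fun _ _ => (1 : ℝ)) q -
          Zdet (pathAdj (n - 1)) (fun _ _ => (1 : ℝ)) q) - 2 ∧
    Zdet (cycAdj n) (fun _ _ => (1 : ℝ)) q =
      ∑ k ∈ Finset.Icc 1 n,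
        (((n + k).choose (2 * k) : ℝ) + ((n + k - 1).choose (2 * k) : ℝ)) * q ^ k := by
  obtain ⟨m, rfl⟩ := Nat.exists_eq_add_of_le' hn
  rw [Zdet_cycAdj_add_three, Nat.add_sub_assoc (by decide), Zdet_pathAdj_succ, Zdet_pathAdj_succ]
  constructor
  · have index : (m + 3 : ℤ) = (m + 1 : ℕ) + 2 := by grind
    rw [index, chebyshevC_add_two, ← Nat.cast_succ, eval_sub, eval_mul, eval_mul, eval_X,
      eval_ofNat]
    field_simp
    ring
  · have index : (m + 3 : ℤ) = (m + 2 : ℕ) + 1 := by grind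
    rw [index, eval_add_two_chebyshevC_sub_two]
    refine Finset.sum_congr rfl fun k _ ↦ ?_
    rw [show m + 3 + k - 1 = m + 2 + k by omega]

/-- **Partition function of cycle graphs.** For `q > 0`,
`Z_{CG_n}(q) = Z_{PG_n}(q) + (2/q)(Z_{PG_n}(q) - Z_{PG_{n-1}}(q)) - 2`
and `Z_{CG_n}(q) = ∑_{k=1}^n (C(n+k, 2k) + C(n+k-1, 2k)) q^k`. -/
theorem cycle_partition (n : ℕ) (hn : 3 ≤ n) (q : ℝ) (hq : 0 < q) :
    Zdet (cycAdj n) (fun _ _ => (1 : ℝ)) q =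
      Zdet (pathAdj n) (fun _ _ => (1 : ℝ)) q +
        (2 / q) * (Zdet (pathAdj n) (fun _ _ => (1 : ℝ)) q -
          Zdet (pathAdj (n - 1)) (fun _ _ => (1 : ℝ)) q) - 2 ∧
    Zdet (cycAdj n) (fun _ _ => (1 : ℝ)) q =
      ∑ k ∈ Finset.Icc 1 n,
        (((n + k).choose (2 * k) : ℝ) + ((n + k - 1).choose (2 * k) : ℝ)) * q ^ k :=
  cycle_partition_general n hn q hq.ne'

end
end

section
/- Let PG_n be the path graph on n vertices with unit edge weights and let x,y∈{1,…,n} be at distance d=y−x>0. Let S=(S_m)_{m≥0} be the simple random walk on ℤ started at 0. Then for any q>0 and any m∈ℕ the two-point correlation satisfies the upper bound U_q^{(PG_n)}(x,y) ≤ 1 − P(|S_m| > d)·(2/(2+q))^m; and for any m∈ℕ such that P(|S_m| < d/2) ≥ 1/2 it satisfies the lower bound U_q^{(PG_n)}(x,y) ≥ ( 1 − (2/(2+q))^m )² · ( 2·P(|S_m| < d/2) − 1 )². -/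
open Classical Finset Filter

noncomputable section

variable {V : Type*} [Fintype V] [DecidableEq V]

/-- One step of following the parent map of a rooted forest. -/
def fstep (f : V → Option V) : Option V → Option V := fun o => o.bind f

/-- `f : V → Option V` encodes a spanning rooted forest structure: every vertex either is a
root (`f x = none`) or points to its parent, and iterating the parent map from any vertex
eventually reaches a root (i.e. there are no cycles). -/
def IsForest (f : V → Option V) : Prop :=
  ∀ x : V, ∃ n : ℕ, (fstep f)^[n] (some x) = none

/-- `f` is a spanning rooted forest of the directed graph with edge relation `E`:
all its (parent-pointing) edges are edges of the graph. -/
def IsRForest (E : V → V → Prop) (f : V → Option V) : Prop :=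
  IsForest f ∧ ∀ x y : V, f x = some y → E x y

/-- The number of roots (equivalently, of trees) of a rooted forest. -/
def nRoots (f : V → Option V) : ℕ := (univ.filter fun x : V => f x = none).card

/-- The weight `w(F) = ∏_{e ∈ F} w(e)` of a rooted forest. -/
def fWeight (w : V → V → ℝ) (f : V → Option V) : ℝ :=
  ∏ x : V, (f x).elim 1 (fun y => w x y)

/-- Non-normalised forest measure of a set `H` of forests: `∑_{F ∈ H} q^{r(F)} w(F)`,
the sum running over spanning rooted forests of the graph belonging to `H`. -/
def fMeasure (E : V → V → Prop) (w : V → V → ℝ) (q : ℝ) (H : Set (V → Option V)) : ℝ :=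
  ∑ f ∈ univ.filter (fun f : V → Option V => IsRForest E f ∧ f ∈ H),
    q ^ nRoots f * fWeight w f

/-- Partition function `Z(q) = ∑_F q^{r(F)} w(F)`. -/
def Zf (E : V → V → Prop) (w : V → V → ℝ) (q : ℝ) : ℝ := fMeasure E w q Set.univ

/-- Probability `P(Φ_q ∈ H)` for the random spanning rooted forest `Φ_q`. -/
def fProb (E : V → V → Prop) (w : V → V → ℝ) (q : ℝ) (H : Set (V → Option V)) : ℝ :=
  fMeasure E w q H / Zf E w q

/-- Ancestor relation in the forest `f`. -/
def anc (f : V → Option V) : V → V → Prop :=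
  Relation.ReflTransGen (fun a b => f a = some b)

/-- `x` and `y` belong to the same tree of the forest `f` (they have a common ancestor). -/
def SameTree (f : V → Option V) (x y : V) : Prop := ∃ z, anc f x z ∧ anc f y z

/-- Two-point correlation `U_q(x,y)`: the probability that `x` and `y` lie in
different trees of `Φ_q`. -/
def Ucorr (E : V → V → Prop) (w : V → V → ℝ) (q : ℝ) (x y : V) : ℝ :=
  fProb E w q {f | ¬ SameTree f x y}

end

noncomputable section

/-- Partition function of the path graph on `m` vertices with unit weights
(with the convention `Z_{PG_0}(q) = 1`). -/
def ZPath (m : ℕ) (q : ℝ) : ℝ := Zf (pathAdj m) (fun _ _ => (1 : ℝ)) q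

open Finset in
/-- `P(pred(S_m))` for the simple random walk `S` on `ℤ` started at `0`
(sum of `m` i.i.d. uniform `±1` steps). -/
def srwProb (m : ℕ) (pred : ℤ → Prop) : ℝ :=
  ((univ.filter fun s : Fin m → Bool =>
      pred (∑ i : Fin m, if s i then (1 : ℤ) else -1)).card : ℝ) / 2 ^ m

/-! A parent map on the path is a word in the directions `-1`, `0`, `1` in which the parents lie,
and it is a forest exactly when no two neighbouring vertices point at each other. Weights of sets
of forests prescribing some edges are therefore products of transfer matrices, which lump to
`2 × 2`. Two vertices share a tree exactly when all edges between them are present. With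
`q = 4 * sinh β ^ 2` the matrix powers are hyperbolic functions, and for `x` vertices to the left
and `k` to the right of the pair, `a = (2 * x + 1) * β`, `b = (2 * k + 1) * β`,

`1 - U = (sinh (a + b) + 2 * d * tanh β * cosh a * cosh b) / sinh (a + b + 2 * d * β)`.

This ratio lies between `exp (-(2 * d * β))` and `1 / cosh ((d + 1) * β / 2) ^ 2`. Since
`2 / (2 + q) = 1 / cosh (2 * β)` is the per-step survival probability of the walk killed at rate
`q`, both bounds follow from reflection estimates: `cosh (2 * β) ^ m * exp (-(2 * d * β))` dominates
`P(|S_m| > d)`, and `cosh (2 * β * k) / cosh (2 * β * D)` is the probability that the killed walk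
started at `k` leaves `(-D, D)`. -/

section Hyperbolic

open Real

lemma exp_neg_mul_sinh_add_le (s u : ℝ) :
    exp (-u) * sinh (s + u) ≤ sinh s + u * exp (-s) := by
  have hid : exp (-u) * sinh (s + u) = sinh s + exp (-s) * (1 - exp (-(2 * u))) / 2 := by
    have h₁ : exp (-u) * exp (s + u) = exp s := by rw [← exp_add]; ring_nf
    have h₂ : exp (-u) * exp (-(s + u)) = exp (-s) * exp (-(2 * u)) := by
      rw [← exp_add, ← exp_add]; ring_nf
    rw [sinh_eq, sinh_eq]
    linear_combination (h₁ - h₂) / 2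
  have hlin : 1 - exp (-(2 * u)) ≤ 2 * u := by linarith [add_one_le_exp (-(2 * u))]
  linarith [mul_le_mul_of_nonneg_left hlin (exp_pos (-s)).le]

lemma mul_exp_neg_le_tanh {β : ℝ} (hβ : 0 ≤ β) : β * exp (-β) ≤ tanh β := by
  rw [tanh_eq_sinh_div_cosh, le_div_iff₀ (cosh_pos β)]
  have hcosh : exp (-β) * cosh β ≤ 1 := by
    rw [exp_neg, inv_mul_le_one₀ (exp_pos β), ← cosh_add_sinh]
    linarith [sinh_nonneg_iff.2 hβ]
  calc β * exp (-β) * cosh β = β * (exp (-β) * cosh β) := mul_assoc ..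
    _ ≤ β := mul_le_of_le_one_right hβ hcosh
    _ ≤ sinh β := self_le_sinh_iff.2 hβ

lemma tanh_nonneg {t : ℝ} (ht : 0 ≤ t) : 0 ≤ tanh t := by
  rw [tanh_eq_sinh_div_cosh]
  exact div_nonneg (sinh_nonneg_iff.2 ht) (cosh_pos t).le

lemma exp_neg_mul_sinh_add_le_add_tanh {β a b d : ℝ} (hβ : 0 ≤ β) (hab : β ≤ a + b)
    (hd : 0 ≤ d) :
    exp (-(2 * d * β)) * sinh (a + b + 2 * d * β) ≤
      sinh (a + b) + 2 * d * tanh β * (cosh a * cosh b) := by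
  have htail : β * exp (-(a + b)) ≤ tanh β * (cosh a * cosh b) :=
    calc β * exp (-(a + b)) ≤ β * exp (-β) := by gcongr
      _ ≤ tanh β := mul_exp_neg_le_tanh hβ
      _ ≤ tanh β * (cosh a * cosh b) := le_mul_of_one_le_right (tanh_nonneg hβ)
          (one_le_mul_of_one_le_of_one_le (one_le_cosh a) (one_le_cosh b))
  calc exp (-(2 * d * β)) * sinh (a + b + 2 * d * β)
      ≤ sinh (a + b) + 2 * d * β * exp (-(a + b)) := exp_neg_mul_sinh_add_le ..
    _ = sinh (a + b) + 2 * d * (β * exp (-(a + b))) := by ring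
    _ ≤ sinh (a + b) + 2 * d * (tanh β * (cosh a * cosh b)) := by gcongr
    _ = _ := by ring

lemma nat_mul_sinh_le {β : ℝ} (hβ : 0 ≤ β) (d : ℕ) : d * sinh β ≤ sinh (d * β) := by
  induction d with
  | zero => simp
  | succ d ih =>
    have hd : 0 ≤ sinh (d * β) := sinh_nonneg_iff.2 (by positivity)
    calc ((d + 1 : ℕ) : ℝ) * sinh β = d * sinh β + sinh β := by push_cast; ring
      _ ≤ sinh (d * β) + sinh β := by gcongr
      _ ≤ sinh (d * β) * cosh β + cosh (d * β) * sinh β := add_le_add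
          (le_mul_of_one_le_right hd (one_le_cosh β))
          (le_mul_of_one_le_left (sinh_nonneg_iff.2 hβ) (one_le_cosh _))
      _ = sinh ((d + 1 : ℕ) * β) := by rw [← sinh_add]; push_cast; ring_nf

lemma cosh_mul_cosh_le {a b β : ℝ} (ha : β ≤ a) (hb : β ≤ b) :
    cosh a * cosh b ≤ cosh β * cosh (a + b - β) := by
  have hsum : cosh (a + b) = cosh (β + (a + b - β)) := by ring_nf
  have hdiff : cosh (a - b) ≤ cosh (β - (a + b - β)) := by
    rw [cosh_le_cosh, ← sq_le_sq]
    nlinarith [mul_nonneg (sub_nonneg.2 ha) (sub_nonneg.2 hb)]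
  rw [cosh_add, cosh_add] at hsum
  rw [cosh_sub, cosh_sub] at hdiff
  linarith

lemma cosh_half_sq (t : ℝ) : cosh (t / 2) ^ 2 = (1 + cosh t) / 2 := by
  have h := cosh_two_mul (t / 2)
  rw [mul_div_cancel₀ t two_ne_zero] at h
  linarith [cosh_sq (t / 2)]

lemma cosh_half_sq_mul_cosh_le {β v : ℝ} (hβ : 0 ≤ β) (hv : β ≤ v) :
    cosh ((v + β) / 2) ^ 2 * cosh β ≤ cosh (2 * v + β) := by
  have hv0 : 0 ≤ v := hβ.trans hv
  calc cosh ((v + β) / 2) ^ 2 * cosh β ≤ cosh (v + β) * cosh v := by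
        refine mul_le_mul ?_ ?_ (cosh_pos β).le (cosh_pos _).le
        · rw [cosh_half_sq]
          linarith [one_le_cosh (v + β)]
        · rwa [cosh_le_cosh, abs_of_nonneg hβ, abs_of_nonneg hv0]
    _ ≤ cosh (v + β) * cosh v + sinh (v + β) * sinh v := le_add_of_nonneg_right <|
        mul_nonneg (sinh_nonneg_iff.2 (by positivity)) (sinh_nonneg_iff.2 hv0)
    _ = cosh (2 * v + β) := by rw [← cosh_add]; ring_nf

lemma cosh_half_sq_mul_sinh_le {β : ℝ} (hβ : 0 ≤ β) {d : ℕ} (hd : 1 ≤ d) :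
    cosh ((d * β + β) / 2) ^ 2 * ((2 * d + 1) * sinh β) ≤ sinh (2 * (d * β) + β) := by
  have hd' : (1 : ℝ) ≤ d := by exact_mod_cast hd
  have hid : sinh (2 * (d * β) + β) = sinh β + 2 * cosh (d * β + β) * sinh (d * β) := by
    have h₁ : sinh (2 * (d * β) + β) = sinh (d * β + β + d * β) := by ring_nf
    have h₂ : sinh β = sinh (d * β + β - d * β) := by ring_nf
    rw [h₁, h₂, sinh_add, sinh_sub]
    ring
  rw [cosh_half_sq, hid]
  have hC : 1 ≤ cosh (d * β + β) := one_le_cosh _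
  set C := cosh (d * β + β)
  calc (1 + C) / 2 * ((2 * d + 1) * sinh β)
      = sinh β + 2 * C * (d * sinh β) - (2 * d - 1) * (C - 1) / 2 * sinh β := by ring
    _ ≤ sinh β + 2 * C * (d * sinh β) := by
        have : 0 ≤ (2 * d - 1) * (C - 1) := mul_nonneg (by linarith) (by linarith)
        have := sinh_nonneg_iff.2 hβ
        exact sub_le_self _ (by positivity)
    _ ≤ sinh β + 2 * C * sinh (d * β) := by gcongr; exact nat_mul_sinh_le hβ d

lemma cosh_half_sq_mul_sinh_add_tanh_le {β a b : ℝ} {d : ℕ} (hβ : 0 ≤ β) (ha : β ≤ a)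
    (hb : β ≤ b) (hd : 1 ≤ d) :
    cosh ((d * β + β) / 2) ^ 2 * (sinh (a + b) + 2 * d * tanh β * (cosh a * cosh b)) ≤
      sinh (a + b + 2 * d * β) := by
  obtain ⟨e, he⟩ : ∃ e, e = a + b - β := ⟨_, rfl⟩
  have he0 : 0 ≤ sinh e := sinh_nonneg_iff.2 (by linarith)
  have hdβ : β ≤ d * β := le_mul_of_one_le_left hβ (by exact_mod_cast hd)
  have htanh : tanh β * (cosh a * cosh b) ≤ sinh β * cosh e :=
    calc tanh β * (cosh a * cosh b) ≤ tanh β * (cosh β * cosh e) :=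
          mul_le_mul_of_nonneg_left (he ▸ cosh_mul_cosh_le ha hb) (tanh_nonneg hβ)
      _ = sinh β * cosh e := by
          rw [tanh_eq_sinh_div_cosh, ← mul_assoc, div_mul_cancel₀ _ (cosh_pos β).ne']
  have hadd : sinh (a + b) = sinh e * cosh β + cosh e * sinh β := by
    rw [← sinh_add, he, sub_add_cancel]
  calc cosh ((d * β + β) / 2) ^ 2 * (sinh (a + b) + 2 * d * tanh β * (cosh a * cosh b))
      ≤ cosh ((d * β + β) / 2) ^ 2 * (sinh (a + b) + 2 * d * (sinh β * cosh e)) := by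
        rw [mul_assoc (2 * (d : ℝ))]; gcongr
    _ = cosh ((d * β + β) / 2) ^ 2 * cosh β * sinh e +
          cosh ((d * β + β) / 2) ^ 2 * ((2 * d + 1) * sinh β) * cosh e := by rw [hadd]; ring
    _ ≤ cosh (2 * (d * β) + β) * sinh e + sinh (2 * (d * β) + β) * cosh e := by
        have := (cosh_pos e).le
        gcongr
        · exact cosh_half_sq_mul_cosh_le hβ hdβ
        · exact cosh_half_sq_mul_sinh_le hβ hd
    _ = sinh (a + b + 2 * d * β) := by
        rw [mul_comm (cosh _), mul_comm (sinh _) (cosh e), ← sinh_add, he]; ring_nf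

lemma one_sub_one_div_cosh_le_tanh_half {t : ℝ} (ht : 0 ≤ t) :
    1 - 1 / cosh t ≤ tanh (t / 2) := by
  obtain ⟨s, rfl⟩ : ∃ s, t = 2 * s := ⟨t / 2, by ring⟩
  have hs : 0 ≤ sinh s := sinh_nonneg_iff.2 (by linarith)
  have hc := cosh_pos s
  rw [mul_div_cancel_left₀ s two_ne_zero, one_sub_div (cosh_pos _).ne', tanh_eq_sinh_div_cosh,
    div_le_div_iff₀ (cosh_pos _) hc, cosh_two_mul]
  have : (cosh s ^ 2 + sinh s ^ 2 - 1) * cosh s = sinh s * (2 * (sinh s * cosh s)) := by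
    rw [cosh_sq]; ring
  rw [this]
  exact mul_le_mul_of_nonneg_left (by linarith [two_mul_le_add_sq (sinh s) (cosh s)]) hs

lemma tanh_sq_eq_one_sub_one_div_cosh_sq (t : ℝ) : tanh t ^ 2 = 1 - 1 / cosh t ^ 2 := by
  rw [tanh_eq_sinh_div_cosh, div_pow, sinh_sq, sub_div, div_self (pow_ne_zero 2 (cosh_pos t).ne')]

lemma exists_pos_eq_four_mul_sinh_sq {q : ℝ} (hq : 0 < q) : ∃ β, 0 < β ∧ q = 4 * sinh β ^ 2 := by
  refine ⟨arsinh (√q / 2), arsinh_pos_iff.2 (by positivity), ?_⟩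
  rw [sinh_arsinh, div_pow, sq_sqrt hq.le]
  ring

lemma two_div_two_add_four_mul_sinh_sq (β : ℝ) :
    2 / (2 + 4 * sinh β ^ 2) = 1 / cosh (2 * β) := by
  rw [cosh_two_mul, cosh_sq, div_eq_div_iff (by positivity) (by positivity)]
  ring

end Hyperbolic

section SimpleRandomWalk

lemma srwProb_zero (p : ℤ → Prop) : srwProb 0 p = if p 0 then 1 else 0 := by
  by_cases h : p 0 <;> simp [srwProb, h]

lemma srwProb_eq_sum (m : ℕ) (p : ℤ → Prop) :
    srwProb m p =
      (∑ s : Fin m → Bool, if p (∑ i, if s i then (1 : ℤ) else -1) then (1 : ℝ) else 0) /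
        2 ^ m := by
  rw [srwProb, natCast_card_filter]

lemma srwProb_succ (m : ℕ) (p : ℤ → Prop) :
    srwProb (m + 1) p =
      (srwProb m (fun z => p (z + 1)) + srwProb m (fun z => p (z - 1))) / 2 := by
  simp only [srwProb_eq_sum]
  rw [← (Fin.consEquiv (fun _ => Bool)).sum_comp, Fintype.sum_prod_type]
  simp only [Fin.consEquiv_apply, Fin.sum_univ_succ, Fin.cons_zero, Fin.cons_succ,
    Fintype.sum_bool, if_true, Bool.false_eq_true, if_false, add_comm (1 : ℤ),
    add_comm (-1 : ℤ), ← sub_eq_add_neg]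
  rw [pow_succ]
  field_simp

lemma srwProb_nonneg (m : ℕ) (p : ℤ → Prop) : 0 ≤ srwProb m p := by
  unfold srwProb
  positivity

lemma srwProb_mono (m : ℕ) {p r : ℤ → Prop} (h : ∀ z, p z → r z) :
    srwProb m p ≤ srwProb m r := by
  unfold srwProb
  gcongr with s
  exact h _

lemma srwProb_not (m : ℕ) (p : ℤ → Prop) : srwProb m (fun z => ¬ p z) = 1 - srwProb m p := by
  induction m generalizing p with
  | zero => by_cases h : p 0 <;> simp [srwProb_zero, h]
  | succ m ih =>
    rw [srwProb_succ, srwProb_succ m p, ih (fun z => p (z + 1)), ih (fun z => p (z - 1))]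
    ring

lemma srwProb_neg (m : ℕ) (p : ℤ → Prop) : srwProb m (fun z => p (-z)) = srwProb m p := by
  induction m generalizing p with
  | zero => simp only [srwProb_zero, neg_zero]
  | succ m ih =>
    rw [srwProb_succ, srwProb_succ m p, ← ih (fun z => p (z + 1)), ← ih (fun z => p (z - 1))]
    simp only [neg_add', neg_sub', sub_neg_eq_add]
    ring

lemma srwProb_or_le (m : ℕ) (p r : ℤ → Prop) :
    srwProb m (fun z => p z ∨ r z) ≤ srwProb m p + srwProb m r := by
  simp only [srwProb, filter_or, ← add_div]
  gcongr
  exact_mod_cast card_union_le _ _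

lemma two_mul_srwProb_pos_le_one (m : ℕ) : 2 * srwProb m (fun z => 0 < z) ≤ 1 := by
  have hneg : srwProb m (fun z => 0 < -z) ≤ srwProb m (fun z => ¬ 0 < z) :=
    srwProb_mono m fun z hz => by omega
  linarith [srwProb_neg m (fun z => 0 < z), srwProb_not m (fun z => 0 < z)]

lemma one_le_two_mul_srwProb_nonneg (m : ℕ) : 1 ≤ 2 * srwProb m (fun z => 0 ≤ z) := by
  have hneg : srwProb m (fun z => ¬ 0 ≤ z) ≤ srwProb m (fun z => 0 < -z) :=
    srwProb_mono m fun z hz => by omega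
  linarith [srwProb_neg m (fun z => 0 < z), srwProb_not m (fun z => 0 ≤ z),
    two_mul_srwProb_pos_le_one m]

/- The factor `2` is that of the reflection principle: at level `k = 0` the bound reduces to
`P(S_m > 0) ≤ 1 / 2`, and for `k > 0` it propagates because `cosh α ^ m * exp (-(k * α))` solves
the recursion of the walk. -/
lemma two_mul_srwProb_lt_le (m k : ℕ) (α : ℝ) :
    2 * srwProb m (fun z => (k : ℤ) < z) ≤ Real.cosh α ^ m * Real.exp (-(k * α)) := by
  induction m generalizing k with
  | zero =>
    rw [srwProb_zero, if_neg (by omega), mul_zero]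
    positivity
  | succ m ih =>
    rcases k with _ | k
    · simp only [Nat.cast_zero, zero_mul, neg_zero, Real.exp_zero, mul_one]
      exact (two_mul_srwProb_pos_le_one _).trans (one_le_pow₀ (Real.one_le_cosh α))
    · have hup : ∀ z : ℤ, ((k + 1 : ℕ) : ℤ) < z + 1 ↔ (k : ℤ) < z := fun z => by omega
      have hdown : ∀ z : ℤ, ((k + 1 : ℕ) : ℤ) < z - 1 ↔ ((k + 2 : ℕ) : ℤ) < z :=
        fun z => by omega
      have hexp : Real.cosh α ^ m * Real.exp (-(k * α)) +
          Real.cosh α ^ m * Real.exp (-((k + 2 : ℕ) * α)) =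
            2 * (Real.cosh α ^ (m + 1) * Real.exp (-((k + 1 : ℕ) * α))) := by
        have h₁ : Real.exp (-(k * α)) = Real.exp (-((k + 1 : ℕ) * α)) * Real.exp α := by
          rw [← Real.exp_add]; push_cast; ring_nf
        have h₂ : Real.exp (-((k + 2 : ℕ) * α)) =
            Real.exp (-((k + 1 : ℕ) * α)) * Real.exp (-α) := by
          rw [← Real.exp_add]; push_cast; ring_nf
        rw [h₁, h₂, pow_succ, Real.cosh_eq α]
        ring
      rw [srwProb_succ]
      simp only [hup, hdown]
      linarith [ih k, ih (k + 2)]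

lemma srwProb_lt_abs_le (m k : ℕ) (α : ℝ) :
    srwProb m (fun z => (k : ℤ) < |z|) ≤ Real.cosh α ^ m * Real.exp (-(k * α)) := by
  have hor := srwProb_or_le m (fun z => (k : ℤ) < z) (fun z => (k : ℤ) < -z)
  simp only [← lt_abs] at hor
  linarith [srwProb_neg m (fun z => (k : ℤ) < z), two_mul_srwProb_lt_le m k α]

lemma one_le_two_mul_srwProb_le_abs_add {k D : ℤ} (hk : |k| = D) (m : ℕ) :
    1 ≤ 2 * srwProb m (fun z => D ≤ |k + z|) := by
  refine (one_le_two_mul_srwProb_nonneg m).trans (mul_le_mul_of_nonneg_left ?_ zero_le_two)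
  rcases le_total 0 k with h | h
  · exact srwProb_mono m fun z hz => by rw [← hk, abs_of_nonneg h]; exact le_abs.2 (by omega)
  · rw [← srwProb_neg]
    exact srwProb_mono m fun z hz => by rw [← hk, abs_of_nonpos h]; exact le_abs.2 (by omega)

/- `c` is the probability that the walk survives one step. Outside the event that it survives
`m` steps, `h k` is bounded by the probability of leaving `(-D, D)` before time `m`, hence, by
reflection, by `2 P(|k + S_m| ≥ D)`. -/
lemma le_pow_add_srwProb_of_subharmonic {c : ℝ} (hc0 : 0 ≤ c) (hc1 : c ≤ 1) {D : ℤ} {h : ℤ → ℝ}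
    (hle : ∀ k, |k| ≤ D → h k ≤ 1)
    (hsub : ∀ k, |k| < D → h k ≤ c * ((h (k + 1) + h (k - 1)) / 2)) (m : ℕ) {k : ℤ}
    (hk : |k| ≤ D) :
    h k ≤ c ^ m + (1 - c ^ m) * (2 * srwProb m (fun z => D ≤ |k + z|)) := by
  induction m generalizing k with
  | zero => simpa using hle k hk
  | succ m ih =>
    rcases hk.lt_or_eq with hlt | heq
    · have hk' := abs_lt.1 hlt
      have hright := ih (k := k + 1) (abs_le.2 (by omega))
      have hleft := ih (k := k - 1) (abs_le.2 (by omega))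
      rw [srwProb_succ]
      simp only [← add_sub_assoc, ← add_assoc]
      simp only [add_right_comm k 1, sub_add_eq_add_sub k 1] at hright hleft
      set a := srwProb m (fun z => D ≤ |k + z + 1|)
      set b := srwProb m (fun z => D ≤ |k + z - 1|)
      have hab : 0 ≤ a + b := add_nonneg (srwProb_nonneg ..) (srwProb_nonneg ..)
      calc h k ≤ c * ((h (k + 1) + h (k - 1)) / 2) := hsub k hlt
        _ ≤ c * (c ^ m + (1 - c ^ m) * (a + b)) := by gcongr; linarith
        _ = c ^ (m + 1) + (c - c ^ (m + 1)) * (a + b) := by ring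
        _ ≤ c ^ (m + 1) + (1 - c ^ (m + 1)) * (a + b) := by gcongr
        _ = _ := by ring
    · have hboundary := one_le_two_mul_srwProb_le_abs_add heq (m + 1)
      have hpow : 0 ≤ 1 - c ^ (m + 1) := sub_nonneg.2 (pow_le_one₀ hc0 hc1)
      linarith [hle k hk, le_mul_of_one_le_right hpow hboundary]

lemma one_sub_pow_mul_srwProb_abs_lt_le (m D : ℕ) (α : ℝ) :
    (1 - (1 / Real.cosh α) ^ m) * (2 * srwProb m (fun z => |z| < (D : ℤ)) - 1) ≤
      1 - 1 / Real.cosh (D * α) := by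
  have hcosh := Real.cosh_pos α
  have hle : ∀ k : ℤ, |k| ≤ D → Real.cosh (k * α) / Real.cosh (D * α) ≤ 1 := fun k hk => by
    rw [div_le_one (Real.cosh_pos _), Real.cosh_le_cosh, abs_mul, abs_mul, Nat.abs_cast]
    exact mul_le_mul_of_nonneg_right (by exact_mod_cast hk) (abs_nonneg α)
  have hharmonic : ∀ k : ℤ, Real.cosh (k * α) / Real.cosh (D * α) = 1 / Real.cosh α *
      ((Real.cosh ((k + 1 : ℤ) * α) / Real.cosh (D * α) +
        Real.cosh ((k - 1 : ℤ) * α) / Real.cosh (D * α)) / 2) := fun k => by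
    have hsum : Real.cosh ((k + 1 : ℤ) * α) + Real.cosh ((k - 1 : ℤ) * α) =
        2 * (Real.cosh (k * α) * Real.cosh α) := by
      push_cast
      rw [add_mul, sub_mul, one_mul, Real.cosh_add, Real.cosh_sub]
      ring
    rw [← add_div, hsum]
    field_simp
  have h := le_pow_add_srwProb_of_subharmonic (one_div_nonneg.2 hcosh.le)
    ((div_le_one hcosh).2 (Real.one_le_cosh α)) hle (fun k _ => (hharmonic k).le) m (k := 0)
    (by simp)
  have hnot : srwProb m (fun z => (D : ℤ) ≤ |0 + z|) =
      1 - srwProb m (fun z => |z| < (D : ℤ)) := by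
    simp only [zero_add, ← not_lt, srwProb_not]
  rw [hnot, Int.cast_zero, zero_mul, Real.cosh_zero] at h
  linarith

end SimpleRandomWalk

section ForestMeasure

variable {V : Type*} {f : V → Option V} {x y z : V}

lemma isForest_of_lt (μ : V → ℕ) (h : ∀ a b, f a = some b → μ b < μ a) : IsForest f := by
  intro a
  induction a using (measure μ).wf.induction with
  | h a ih =>
    rcases ha : f a with _ | b
    · exact ⟨1, ha⟩
    · obtain ⟨k, hk⟩ := ih b (h a b ha)
      exact ⟨k + 1, by rwa [Function.iterate_succ_apply, fstep, Option.bind_some, ha]⟩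

lemma IsForest.ne_some_of_eq_some (hf : IsForest f) (hxy : f x = some y) : f y ≠ some x := by
  intro hyx
  obtain ⟨k, hk⟩ := hf x
  have hcycle : Set.MapsTo (fstep f) {some x, some y} {some x, some y} := by
    rintro _ (rfl | rfl) <;> simp [fstep, hxy, hyx]
  simpa [hk] using hcycle.iterate k (Set.mem_insert (some x) _)

lemma SameTree.trans (hxy : SameTree f x y) (hyz : SameTree f y z) : SameTree f x z := by
  obtain ⟨a, hxa, hya⟩ := hxy
  obtain ⟨b, hyb, hzb⟩ := hyz
  have hunique : Relator.RightUnique (fun a b => f a = some b) := fun a b c hb hc =>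
    Option.some.inj (hb.symm.trans hc)
  rcases Relation.ReflTransGen.total_of_right_unique hunique hya hyb with hab | hba
  · exact ⟨b, hxa.trans hab, hzb⟩
  · exact ⟨a, hxa, hzb.trans hba⟩

lemma anc.mem_of_closed {s : Set V} (h : anc f x z) (hs : ∀ a b, f a = some b → a ∈ s → b ∈ s)
    (hx : x ∈ s) : z ∈ s := by
  induction h with
  | refl => exact hx
  | tail _ hbc ih => exact hs _ _ hbc ih

variable [Fintype V] [DecidableEq V] {E : V → V → Prop} {w : V → V → ℝ} {q : ℝ}

lemma fMeasure_compl (H : Set (V → Option V)) :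
    fMeasure E w q Hᶜ = Zf E w q - fMeasure E w q H := by
  simp only [Zf, fMeasure, eq_sub_iff_add_eq', Set.mem_univ, and_true, Set.mem_compl_iff,
    ← filter_filter]
  exact sum_filter_add_sum_filter_not ..

lemma Ucorr_eq_one_sub (hZ : Zf E w q ≠ 0) (x y : V) :
    Ucorr E w q x y = 1 - fMeasure E w q {f | SameTree f x y} / Zf E w q := by
  rw [Ucorr, fProb, ← Set.compl_ofPred, fMeasure_compl, sub_div, div_self hZ]

lemma fMeasure_congr {H H' : Set (V → Option V)} (h : ∀ f, IsRForest E f → (f ∈ H ↔ f ∈ H')) :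
    fMeasure E w q H = fMeasure E w q H' := by
  unfold fMeasure
  congr 1
  exact filter_congr fun f _ => and_congr_right (h f)

lemma fMeasure_one (H : Set (V → Option V)) :
    fMeasure E (fun _ _ => 1) q H =
      ∑ f ∈ univ.filter (fun f => IsRForest E f ∧ f ∈ H), q ^ nRoots f := by
  refine sum_congr rfl fun f _ => ?_
  have hweight : fWeight (fun _ _ => 1) f = 1 := prod_eq_one fun x _ => by cases f x <;> rfl
  rw [hweight, mul_one]

end ForestMeasure

section TransferMatrix

open Matrix

variable {R S : Type*} [CommSemiring R] [Fintype S]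

/-- The row vector `u K₀ ⋯ Kₙ₋₁` of the inhomogeneous transfer-matrix method: its entry at `t` is
the total weight of the words of length `n + 1` over `S` with last letter `t`. -/
def transferVec (u : S → R) (K : ℕ → Matrix S S R) : ℕ → S → R
  | 0 => u
  | n + 1 => transferVec u K n ᵥ* K n

variable (u : S → R) {K : ℕ → Matrix S S R}

lemma sum_mul_prod_mul_eq_transferVec_dotProduct (g : S → R) (N : ℕ) :
    ∑ w : Fin (N + 1) → S,
        u (w 0) * (∏ i : Fin N, K i (w i.castSucc) (w i.succ)) * g (w (Fin.last N)) =
      transferVec u K N ⬝ᵥ g := by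
  induction N generalizing g with
  | zero =>
    rw [← (Equiv.funUnique (Fin 1) S).symm.sum_comp]
    simp [transferVec, dotProduct]
  | succ N ih =>
    rw [← (Fin.snocEquiv (fun _ => S)).sum_comp, Fintype.sum_prod_type_right, transferVec,
      ← dotProduct_mulVec, ← ih]
    refine sum_congr rfl fun w _ => ?_
    rw [mulVec, dotProduct, mul_sum]
    refine sum_congr rfl fun t _ => ?_
    simp only [Fin.snocEquiv_apply, Fin.prod_univ_castSucc, Fin.snoc_castSucc, Fin.succ_last,
      Fin.succ_castSucc, Fin.snoc_last, ← Fin.castSucc_zero (n := N + 1), Fin.val_castSucc,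
      Fin.val_last]
    ring

lemma transferVec_add_of_forall_eq [DecidableEq S] {A : Matrix S S R} {n k : ℕ}
    (h : ∀ j < k, K (n + j) = A) : transferVec u K (n + k) = transferVec u K n ᵥ* A ^ k := by
  induction k with
  | zero => simp
  | succ k ih =>
    rw [← add_assoc, transferVec, ih fun j hj => h j (hj.trans k.lt_succ_self),
      h k k.lt_succ_self, vecMul_vecMul, pow_succ]

lemma transferVec_of_forall_eq [DecidableEq S] {A : Matrix S S R} {k : ℕ}
    (h : ∀ j < k, K j = A) : transferVec u K k = u ᵥ* A ^ k := by
  simpa only [zero_add, transferVec] using transferVec_add_of_forall_eq u (n := 0)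
    (by simpa only [zero_add])

lemma transferVec_vecMul_of_intertwine {T : Type*} [Fintype T] {K' : ℕ → Matrix T T R}
    {L : Matrix S T R} (hL : ∀ n, K n * L = L * K' n) (n : ℕ) :
    transferVec u K n ᵥ* L = transferVec (u ᵥ* L) K' n := by
  induction n with
  | zero => rfl
  | succ n ih => rw [transferVec, transferVec, vecMul_vecMul, hL, ← vecMul_vecMul, ih]

end TransferMatrix

section PathForest

variable {n : ℕ} {f : Fin n → Option (Fin n)}

lemma isForest_iff_of_pathAdj (hf : ∀ x y, f x = some y → pathAdj n x y) :
    IsForest f ↔ ∀ x y, f x = some y → f y ≠ some x := by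
  refine ⟨fun h x y => h.ne_some_of_eq_some, fun h => ?_⟩
  -- Without 2-cycles a lineage never turns around, so it moves monotonically towards one end.
  refine isForest_of_lt (fun a => (f a).elim 0 fun b => if a < b then n - a else a + 1) ?_
  intro a b hab
  have hadj := hf a b hab
  rcases hb : f b with _ | c
  · simp only [hab, Option.elim_some, Option.elim_none]
    split <;> omega
  · have hca : c ≠ a := fun hca => h a b hab (hca ▸ hb)
    have hadj' := hf b c hb
    simp only [hab, Option.elim_some, Fin.lt_def]
    simp only [pathAdj, ne_eq, Fin.ext_iff] at hadj hadj' hca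
    split_ifs <;> omega

variable {N : ℕ} {f : Fin (N + 1) → Option (Fin (N + 1))}

lemma isForest_iff_forall_castSucc_succ (hf : ∀ x y, f x = some y → pathAdj (N + 1) x y) :
    IsForest f ↔ ∀ i : Fin N, ¬(f i.castSucc = some i.succ ∧ f i.succ = some i.castSucc) := by
  rw [isForest_iff_of_pathAdj hf]
  refine ⟨fun h i hi => h _ _ hi.1 hi.2, fun h x y hxy hyx => ?_⟩
  rcases hf x y hxy with hadj | hadj
  · have hx : (⟨x, by omega⟩ : Fin N).castSucc = x := rfl
    have hy : (⟨x, by omega⟩ : Fin N).succ = y := Fin.ext hadj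
    exact h _ (by rw [hx, hy]; exact ⟨hxy, hyx⟩)
  · have hx : (⟨y, by omega⟩ : Fin N).succ = x := Fin.ext hadj
    have hy : (⟨y, by omega⟩ : Fin N).castSucc = y := rfl
    exact h _ (by rw [hx, hy]; exact ⟨hyx, hxy⟩)

/-- The parent maps on the path with `N + 1` vertices that contain, in one of its two
orientations, the edge `{i, i + 1}` for every `i` satisfying `P`. -/
def containsEdges (N : ℕ) (P : ℕ → Prop) : Set (Fin (N + 1) → Option (Fin (N + 1))) :=
  {f | ∀ i : Fin N, P i → f i.castSucc = some i.succ ∨ f i.succ = some i.castSucc}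

lemma eq_castSucc_and_eq_succ_of_pathAdj {i : Fin N} {a b : Fin (N + 1)}
    (hab : pathAdj (N + 1) a b) (ha : a ≤ i.castSucc) (hb : i.castSucc < b) :
    a = i.castSucc ∧ b = i.succ := by
  simp only [pathAdj, Fin.le_def, Fin.lt_def, Fin.ext_iff, Fin.val_castSucc, Fin.val_succ] at *
  omega

lemma SameTree.eq_some_or_of_pathAdj (hf : ∀ x y, f x = some y → pathAdj (N + 1) x y)
    {x y : Fin (N + 1)} (hxy : SameTree f x y) {i : Fin N} (hx : x ≤ i.castSucc)
    (hy : i.castSucc < y) : f i.castSucc = some i.succ ∨ f i.succ = some i.castSucc := by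
  by_contra! hcut
  obtain ⟨z, hxz, hyz⟩ := hxy
  have hleft : z ∈ Set.Iic i.castSucc := by
    refine hxz.mem_of_closed (fun a b hab ha => ?_) hx
    by_contra! hb
    obtain ⟨rfl, rfl⟩ := eq_castSucc_and_eq_succ_of_pathAdj (hf a b hab) ha (not_le.1 hb)
    exact hcut.1 hab
  have hright : z ∈ Set.Ioi i.castSucc := by
    refine hyz.mem_of_closed (fun a b hab ha => ?_) hy
    by_contra! hb
    obtain ⟨rfl, rfl⟩ := eq_castSucc_and_eq_succ_of_pathAdj (hf a b hab).symm (not_lt.1 hb) ha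
    exact hcut.2 hab
  exact (Set.mem_Iic.1 hleft).not_gt hright

lemma sameTree_iff_mem_containsEdges (hf : ∀ x y, f x = some y → pathAdj (N + 1) x y) {x y : ℕ}
    (hxy : x ≤ y) (hy : y < N + 1) :
    SameTree f ⟨x, hxy.trans_lt hy⟩ ⟨y, hy⟩ ↔
      f ∈ containsEdges N fun i => x ≤ i ∧ i < y := by
  refine ⟨fun h i hi => h.eq_some_or_of_pathAdj hf hi.1 hi.2, fun h => ?_⟩
  induction y, hxy using Nat.le_induction with
  | base => exact ⟨_, .refl, .refl⟩
  | succ y hxy ih =>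
    have hprev := ih (by omega) fun i hi => h i ⟨hi.1, by omega⟩
    refine hprev.trans ?_
    rcases h ⟨y, by omega⟩ ⟨hxy, y.lt_succ_self⟩ with hup | hdown
    · exact ⟨_, .single hup, .refl⟩
    · exact ⟨_, .refl, .single hdown⟩

end PathForest

section PathWords

open Matrix

variable {n N : ℕ}

/-- The word over `SignType` describing a parent map on the path: its letter at `i` is the
direction in which the parent of `i` lies, and `0` if `i` is a root. -/
def parentDir (f : Fin n → Option (Fin n)) (i : Fin n) : SignType :=
  (f i).elim 0 fun j => SignType.sign ((j : ℤ) - i)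

/-- The parent map on the path described by a word over `SignType`; a letter pointing out of the
path is read as a root. -/
def parentOfDir (w : Fin n → SignType) (i : Fin n) : Option (Fin n) :=
  if h : w i ≠ 0 ∧ ∃ j : Fin n, (j : ℤ) = i + w i then some h.2.choose else none

lemma parentOfDir_eq_some_iff {w : Fin n → SignType} {i j : Fin n} :
    parentOfDir w i = some j ↔ w i ≠ 0 ∧ (j : ℤ) = i + w i := by
  unfold parentOfDir
  split_ifs with h
  · have hj := h.2.choose_spec
    rw [Option.some_inj, Fin.ext_iff, ← Nat.cast_inj (R := ℤ), hj, eq_comm, and_iff_right h.1]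
  · simp only [false_iff]
    exact fun h' => h ⟨h'.1, j, h'.2⟩

lemma pathAdj_of_parentOfDir_eq_some {w : Fin n → SignType} {i j : Fin n}
    (h : parentOfDir w i = some j) : pathAdj n i j := by
  obtain ⟨hw, hj⟩ := parentOfDir_eq_some_iff.1 h
  rcases SignType.trichotomy (w i) with hs | hs | hs
  · rw [hs, SignType.coe_neg_one] at hj
    right
    omega
  · exact absurd hs hw
  · rw [hs, SignType.coe_one] at hj
    left
    omega

lemma parentDir_of_eq_some {f : Fin n → Option (Fin n)}
    (hf : ∀ x y, f x = some y → pathAdj n x y) {i j : Fin n} (h : f i = some j) :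
    parentDir f i ≠ 0 ∧ (j : ℤ) = i + parentDir f i := by
  simp only [parentDir, h, Option.elim_some]
  rcases hf i j h with hj | hj
  · rw [show (j : ℤ) - i = 1 by omega, sign_one, SignType.coe_one]
    exact ⟨one_ne_zero, by omega⟩
  · rw [show (j : ℤ) - i = -1 by omega, Left.sign_neg, sign_one, SignType.coe_neg_one]
    exact ⟨by decide, by omega⟩

lemma parentOfDir_parentDir {f : Fin n → Option (Fin n)}
    (hf : ∀ x y, f x = some y → pathAdj n x y) : parentOfDir (parentDir f) = f := by
  ext1 i
  rcases h : f i with _ | j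
  · exact dif_neg fun hw => hw.1 (by simp [parentDir, h])
  · exact parentOfDir_eq_some_iff.2 (parentDir_of_eq_some hf h)

lemma parentOfDir_castSucc_eq_some_succ {w : Fin (N + 1) → SignType} {i : Fin N} :
    parentOfDir w i.castSucc = some i.succ ↔ w i.castSucc = 1 := by
  rw [parentOfDir_eq_some_iff]
  generalize w i.castSucc = s
  cases s <;> simp

lemma parentOfDir_succ_eq_some_castSucc {w : Fin (N + 1) → SignType} {i : Fin N} :
    parentOfDir w i.succ = some i.castSucc ↔ w i.succ = -1 := by
  rw [parentOfDir_eq_some_iff]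
  generalize w i.succ = s
  cases s <;> simp [add_assoc]

lemma parentDir_parentOfDir {w : Fin (N + 1) → SignType} (h0 : w 0 ≠ -1)
    (hlast : w (Fin.last N) ≠ 1) : parentDir (parentOfDir w) = w := by
  ext1 i
  rcases hs : w i with _ | _ | _
  · simp [parentDir, parentOfDir, hs]
  · obtain ⟨k, rfl⟩ := Fin.exists_succ_eq.2 fun hi : i = 0 => h0 (hi ▸ hs)
    simp [parentDir, parentOfDir_succ_eq_some_castSucc.2 hs]
  · obtain ⟨k, rfl⟩ := Fin.exists_castSucc_eq.2 fun hi : i = Fin.last N => hlast (hi ▸ hs)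
    simp [parentDir, parentOfDir_castSucc_eq_some_succ.2 hs]

lemma parentDir_zero_ne_neg_one (f : Fin (N + 1) → Option (Fin (N + 1))) :
    parentDir f 0 ≠ -1 := by
  rcases h : f 0 with _ | j
  · simp [parentDir, h]
  · simp only [parentDir, h, Option.elim_some, ne_eq, sign_eq_neg_one_iff, Fin.val_zero]
    omega

lemma parentDir_last_ne_one (f : Fin (N + 1) → Option (Fin (N + 1))) :
    parentDir f (Fin.last N) ≠ 1 := by
  rcases h : f (Fin.last N) with _ | j
  · simp [parentDir, h]
  · simp only [parentDir, h, Option.elim_some, ne_eq, sign_eq_one_iff, Fin.val_last]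
    omega

/-- The constraint on the letters `s`, `t` at the two ends of an edge: the ends are not each
other's parents and, if `p` holds, one of them is the parent of the other. -/
def EdgeAdmissible (p : Prop) (s t : SignType) : Prop :=
  ¬(s = 1 ∧ t = -1) ∧ (p → s = 1 ∨ t = -1)

/-- The words describing the forests of the path that contain every edge `{i, i + 1}` with
`P i`. -/
def IsForestWord (N : ℕ) (P : ℕ → Prop) (w : Fin (N + 1) → SignType) : Prop :=
  w 0 ≠ -1 ∧ w (Fin.last N) ≠ 1 ∧ ∀ i : Fin N, EdgeAdmissible (P i) (w i.castSucc) (w i.succ)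

variable {P : ℕ → Prop}

lemma forall_edgeAdmissible_iff {w : Fin (N + 1) → SignType} :
    (∀ i : Fin N, EdgeAdmissible (P i) (w i.castSucc) (w i.succ)) ↔
      IsRForest (pathAdj (N + 1)) (parentOfDir w) ∧ parentOfDir w ∈ containsEdges N P := by
  have hpath : ∀ x y, parentOfDir w x = some y → pathAdj (N + 1) x y :=
    fun _ _ => pathAdj_of_parentOfDir_eq_some
  rw [IsRForest, and_iff_left hpath, isForest_iff_forall_castSucc_succ hpath]
  simp only [EdgeAdmissible, containsEdges, parentOfDir_castSucc_eq_some_succ,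
    parentOfDir_succ_eq_some_castSucc, forall_and, Set.mem_ofPred_eq]

lemma fMeasure_containsEdges_eq_sum (q : ℝ) :
    fMeasure (pathAdj (N + 1)) (fun _ _ => 1) q (containsEdges N P) =
      ∑ w ∈ univ.filter (IsForestWord N P), q ^ #{i | w i = 0} := by
  rw [fMeasure_one]
  refine sum_nbij' parentDir parentOfDir (fun f hf => ?_) (fun w hw => ?_) (fun f hf => ?_)
    (fun w hw => ?_) fun f hf => ?_
  all_goals rw [mem_filter_univ] at *
  · rw [← parentOfDir_parentDir hf.1.2] at hf
    exact ⟨parentDir_zero_ne_neg_one f, parentDir_last_ne_one f, forall_edgeAdmissible_iff.2 hf⟩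
  · exact forall_edgeAdmissible_iff.1 hw.2.2
  · exact parentOfDir_parentDir hf.1.2
  · exact parentDir_parentOfDir hw.1 hw.2.1
  · rw [nRoots]
    congr 2
    refine filter_congr fun i _ => ⟨fun hi => ?_, fun hi => ?_⟩
    · simp [parentDir, hi]
    · by_contra hne
      obtain ⟨j, hj⟩ := Option.ne_none_iff_exists'.1 hne
      exact (parentDir_of_eq_some hf.1.2 hj).1 hi

/-- Transfer matrix along an edge: the letter `t` read at the far end contributes `q` if it is a
root. -/
def letterMatrix (q : ℝ) (p : Prop) : Matrix SignType SignType ℝ :=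
  of fun s t => if EdgeAdmissible p s t then (if t = 0 then q else 1) else 0

/- The conditions at the two ends of the path are those of an edge towards a phantom vertex, with
letter `1` on the left and `-1` on the right. -/
lemma letterMatrix_word_weight (q : ℝ) (w : Fin (N + 1) → SignType) :
    letterMatrix q False 1 (w 0) * (∏ i : Fin N, letterMatrix q (P i) (w i.castSucc) (w i.succ)) *
        letterMatrix q False (w (Fin.last N)) (-1) =
      if IsForestWord N P w then q ^ #{i | w i = 0} else 0 := by
  have hroots : q ^ #{i | w i = 0} = ∏ i, if w i = 0 then q else 1 := by
    rw [prod_ite, prod_const, prod_const_one, mul_one]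
  rw [hroots, Fin.prod_univ_succ]
  simp only [letterMatrix, of_apply, prod_ite_zero, mem_univ, true_imp_iff]
  have h0 : EdgeAdmissible False 1 (w 0) ↔ w 0 ≠ -1 := by simp [EdgeAdmissible]
  have hlast : EdgeAdmissible False (w (Fin.last N)) (-1) ↔ w (Fin.last N) ≠ 1 := by
    simp [EdgeAdmissible]
  rw [h0, hlast, if_neg (by decide : (-1 : SignType) ≠ 0)]
  by_cases hw : IsForestWord N P w
  · rw [if_pos hw, if_pos hw.1, if_pos hw.2.1, if_pos hw.2.2, mul_one]
  · rw [if_neg hw]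
    simp only [IsForestWord, not_and_or] at hw
    rcases hw with h | h | h <;> simp only [if_neg h, zero_mul, mul_zero]

lemma fMeasure_containsEdges_eq_transferVec_letterMatrix (q : ℝ) :
    fMeasure (pathAdj (N + 1)) (fun _ _ => 1) q (containsEdges N P) =
      transferVec (Pi.single 1 1 ᵥ* letterMatrix q False) (fun i => letterMatrix q (P i)) N ⬝ᵥ
        letterMatrix q False *ᵥ Pi.single (-1) 1 := by
  rw [← sum_mul_prod_mul_eq_transferVec_dotProduct, fMeasure_containsEdges_eq_sum, sum_filter]
  refine sum_congr rfl fun w _ => ?_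
  rw [single_one_vecMul, mulVec_single_one]
  exact (letterMatrix_word_weight q w).symm

end PathWords

section EdgeMatrix

open Matrix

variable {N : ℕ} {P : ℕ → Prop} {q : ℝ}

/-- The transfer matrix `letterMatrix` lumped to the two states of the last vertex read: settled
(`0`), or waiting for its parent on its right (`1`). -/
def edgeMatrix (q : ℝ) (p : Prop) : Matrix (Fin 2) (Fin 2) ℝ :=
  if p then !![1, 0; q, 1] else !![q + 1, 1; q, 1]

/-- The lumping of letters into the two states of `edgeMatrix`. -/
def settle : Matrix SignType (Fin 2) ℝ := of fun s => if s = 1 then ![0, 1] else ![1, 0]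

lemma letterMatrix_mul_settle (p : Prop) :
    letterMatrix q p * settle = settle * edgeMatrix q p := by
  ext s j
  by_cases hp : p <;> cases s <;> fin_cases j <;>
    simp [mul_apply, SignType.univ_eq, letterMatrix, settle, edgeMatrix, EdgeAdmissible, hp]

lemma fMeasure_containsEdges :
    fMeasure (pathAdj (N + 1)) (fun _ _ => 1) q (containsEdges N P) =
      transferVec (Pi.single 1 1 ᵥ* edgeMatrix q False) (fun i => edgeMatrix q (P i)) N 0 := by
  have hend : letterMatrix q False *ᵥ Pi.single (-1) 1 = settle *ᵥ Pi.single 0 1 := by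
    ext s
    cases s <;> simp [letterMatrix, settle, EdgeAdmissible]
  have hstart : Pi.single 1 1 ᵥ* settle = Pi.single 1 1 := by
    ext j
    fin_cases j <;> simp [settle]
  rw [fMeasure_containsEdges_eq_transferVec_letterMatrix, hend, dotProduct_mulVec,
    transferVec_vecMul_of_intertwine _ (fun n => letterMatrix_mul_settle (P n)),
    dotProduct_single_one, vecMul_vecMul, letterMatrix_mul_settle, ← vecMul_vecMul, hstart]

lemma Zf_pathAdj : Zf (pathAdj (N + 1)) (fun _ _ => 1) q = (edgeMatrix q False ^ (N + 1)) 1 0 := by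
  have huniv : Set.univ = containsEdges N fun _ => False := by simp [containsEdges]
  rw [Zf, huniv, fMeasure_containsEdges, transferVec_of_forall_eq _ fun _ _ => rfl,
    vecMul_vecMul, ← pow_succ', single_one_vecMul, row_apply]

lemma fMeasure_sameTree (x d k : ℕ) :
    fMeasure (pathAdj (x + d + k + 1)) (fun _ _ => 1) q
        {f | SameTree f ⟨x, by omega⟩ ⟨x + d, by omega⟩} =
      (edgeMatrix q False ^ (x + 1) * edgeMatrix q True ^ d * edgeMatrix q False ^ k) 1 0 := by
  have hleft : ∀ j < x, edgeMatrix q (x ≤ j ∧ j < x + d) = edgeMatrix q False :=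
    fun j hj => congrArg _ (eq_false (by omega))
  have hmiddle : ∀ j < d, edgeMatrix q (x ≤ x + j ∧ x + j < x + d) = edgeMatrix q True :=
    fun j hj => congrArg _ (eq_true (by omega))
  have hright : ∀ j < k, edgeMatrix q (x ≤ x + d + j ∧ x + d + j < x + d) = edgeMatrix q False :=
    fun j _ => congrArg _ (eq_false (by omega))
  refine (fMeasure_congr fun f hf => sameTree_iff_mem_containsEdges hf.2 (Nat.le_add_right x d)
    (by omega)).trans ?_
  rw [fMeasure_containsEdges, transferVec_add_of_forall_eq _ hright,
    transferVec_add_of_forall_eq _ hmiddle, transferVec_of_forall_eq _ hleft, vecMul_vecMul,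
    vecMul_vecMul, vecMul_vecMul, single_one_vecMul, row_apply, pow_succ' _ x]
  simp only [Matrix.mul_assoc]

lemma edgeMatrix_true_pow (d : ℕ) : edgeMatrix q True ^ d = !![1, 0; d * q, 1] := by
  induction d with
  | zero => simp [one_fin_two]
  | succ d ih =>
    rw [pow_succ, ih]
    simp [edgeMatrix, add_mul]

end EdgeMatrix

section ClosedForms

open Matrix Real

variable {β : ℝ}

/-- The one-parameter group of matrices that interpolates, at the times `t = 2 * n * β`, the powers
of `edgeMatrix q False` for `q = 4 * sinh β ^ 2`. -/
def edgeFlow (β t : ℝ) : Matrix (Fin 2) (Fin 2) ℝ :=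
  !![cosh (t + β) / cosh β, sinh t / (2 * sinh β * cosh β);
    2 * sinh β * sinh t / cosh β, cosh (t - β) / cosh β]

lemma edgeFlow_mul_edgeMatrix (hβ : β ≠ 0) (t : ℝ) :
    edgeFlow β t * edgeMatrix (4 * sinh β ^ 2) False = edgeFlow β (t + 2 * β) := by
  have hs : sinh β ≠ 0 := sinh_ne_zero.2 hβ
  have hc : cosh β ≠ 0 := (cosh_pos β).ne'
  have hsq := cosh_sq β
  ext i j
  fin_cases i <;> fin_cases j <;>
    simp [edgeFlow, edgeMatrix, cosh_add, cosh_sub, sinh_add, cosh_two_mul, sinh_two_mul] <;>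
    field_simp <;> grind

lemma edgeMatrix_false_pow (hβ : β ≠ 0) (n : ℕ) :
    edgeMatrix (4 * sinh β ^ 2) False ^ n = edgeFlow β (2 * n * β) := by
  induction n with
  | zero => simp [edgeFlow, one_fin_two, (cosh_pos β).ne']
  | succ n ih =>
    rw [pow_succ, ih, edgeFlow_mul_edgeMatrix hβ]
    push_cast
    ring_nf

lemma Zf_pathAdj_four_mul_sinh_sq (hβ : β ≠ 0) (N : ℕ) :
    Zf (pathAdj (N + 1)) (fun _ _ => 1) (4 * sinh β ^ 2) =
      2 * tanh β * sinh (2 * (N + 1 : ℕ) * β) := by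
  rw [Zf_pathAdj, edgeMatrix_false_pow hβ, tanh_eq_sinh_div_cosh]
  simp only [edgeFlow, of_apply, cons_val_one, cons_val_zero]
  ring

lemma fMeasure_sameTree_four_mul_sinh_sq (hβ : β ≠ 0) (x d k : ℕ) {a b : ℝ}
    (ha : a = (2 * x + 1) * β) (hb : b = (2 * k + 1) * β) :
    fMeasure (pathAdj (x + d + k + 1)) (fun _ _ => 1) (4 * sinh β ^ 2)
        {f | SameTree f ⟨x, by omega⟩ ⟨x + d, by omega⟩} =
      2 * tanh β * (sinh (a + b) + 2 * d * tanh β * (cosh a * cosh b)) := by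
  have hc : cosh β ≠ 0 := (cosh_pos β).ne'
  have hx : 2 * (x + 1 : ℕ) * β = a + β := by
    rw [ha]
    push_cast
    ring
  have hk : 2 * k * β = b - β := by rw [hb]; ring
  rw [fMeasure_sameTree, edgeMatrix_false_pow hβ, edgeMatrix_false_pow hβ, edgeMatrix_true_pow,
    hx, hk, tanh_eq_sinh_div_cosh, edgeFlow, edgeFlow, mul_fin_two, mul_fin_two]
  simp only [of_apply, cons_val_one, cons_val_zero, add_sub_cancel_right, sub_add_cancel]
  rw [sinh_add, sinh_add, sinh_sub]
  field_simp
  ring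

lemma Ucorr_pathAdj (hβ : 0 < β) (x d k : ℕ) {a b : ℝ} (ha : a = (2 * x + 1) * β)
    (hb : b = (2 * k + 1) * β) :
    Ucorr (pathAdj (x + d + k + 1)) (fun _ _ => 1) (4 * sinh β ^ 2) ⟨x, by omega⟩
        ⟨x + d, by omega⟩ =
      1 - (sinh (a + b) + 2 * d * tanh β * (cosh a * cosh b)) / sinh (a + b + 2 * d * β) := by
  have htanh : 0 < tanh β := by
    rw [tanh_eq_sinh_div_cosh]
    exact div_pos (sinh_pos_iff.2 hβ) (cosh_pos β)
  have hlen : 2 * (x + d + k + 1 : ℕ) * β = a + b + 2 * d * β := by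
    rw [ha, hb]
    push_cast
    ring
  have hZ := Zf_pathAdj_four_mul_sinh_sq hβ.ne' (x + d + k)
  have hZ0 : Zf (pathAdj (x + d + k + 1)) (fun _ _ => 1) (4 * sinh β ^ 2) ≠ 0 := by
    rw [hZ]
    exact (mul_pos (mul_pos two_pos htanh) (sinh_pos_iff.2 (by positivity))).ne'
  rw [Ucorr_eq_one_sub hZ0, hZ, fMeasure_sameTree_four_mul_sinh_sq hβ.ne' x d k ha hb,
    mul_div_mul_left _ _ (mul_pos two_pos htanh).ne', hlen]

end ClosedForms

section CorrelationBounds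

open Real

variable {β : ℝ}

lemma Ucorr_pathAdj_le (hβ : 0 < β) (x d k : ℕ) :
    Ucorr (pathAdj (x + d + k + 1)) (fun _ _ => 1) (4 * sinh β ^ 2) ⟨x, by omega⟩
        ⟨x + d, by omega⟩ ≤
      1 - exp (-(d * (2 * β))) := by
  have hexp : (d : ℝ) * (2 * β) = 2 * d * β := by ring
  rw [Ucorr_pathAdj hβ x d k rfl rfl, hexp]
  refine sub_le_sub_left ?_ 1
  rw [le_div_iff₀ (sinh_pos_iff.2 (by positivity))]
  refine exp_neg_mul_sinh_add_le_add_tanh hβ.le ?_ (by positivity)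
  rw [← add_mul]
  exact le_mul_of_one_le_left hβ.le (by linarith [x.cast_nonneg (α := ℝ), k.cast_nonneg (α := ℝ)])

lemma tanh_sq_le_Ucorr_pathAdj (hβ : 0 < β) {d : ℕ} (hd : 1 ≤ d) (x k : ℕ) :
    tanh ((d * β + β) / 2) ^ 2 ≤
      Ucorr (pathAdj (x + d + k + 1)) (fun _ _ => 1) (4 * sinh β ^ 2) ⟨x, by omega⟩
        ⟨x + d, by omega⟩ := by
  have hodd : ∀ j : ℕ, β ≤ (2 * j + 1) * β := fun j => le_mul_of_one_le_left hβ.le (by simp)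
  rw [Ucorr_pathAdj hβ x d k rfl rfl, tanh_sq_eq_one_sub_one_div_cosh_sq]
  refine sub_le_sub_left ?_ 1
  rw [div_le_div_iff₀ (sinh_pos_iff.2 (by positivity)) (by positivity), one_mul, mul_comm]
  exact cosh_half_sq_mul_sinh_add_tanh_le hβ.le (hodd x) (hodd k) hd

lemma one_sub_pow_mul_srwProb_le_tanh (hβ : 0 ≤ β) (m d : ℕ) :
    (1 - (1 / cosh (2 * β)) ^ m) * (2 * srwProb m (fun z => 2 * |z| < (d : ℤ)) - 1) ≤
      tanh ((d * β + β) / 2) := by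
  have hiff : ∀ z : ℤ, 2 * |z| < (d : ℤ) ↔ |z| < ((d + 1) / 2 : ℕ) := fun z => by omega
  have hdiv : (((d + 1) / 2 : ℕ) : ℝ) * (2 * β) ≤ d * β + β :=
    calc (((d + 1) / 2 : ℕ) : ℝ) * (2 * β) = ((d + 1) / 2 * 2 : ℕ) * β := by push_cast; ring
      _ ≤ (d + 1 : ℕ) * β := by gcongr; exact Nat.div_mul_le_self (d + 1) 2
      _ = d * β + β := by push_cast; ring
  simp only [hiff]
  calc _ ≤ 1 - 1 / cosh (((d + 1) / 2 : ℕ) * (2 * β)) := one_sub_pow_mul_srwProb_abs_lt_le ..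
    _ ≤ 1 - 1 / cosh (d * β + β) := by
        gcongr
        rwa [cosh_le_cosh, abs_of_nonneg (by positivity), abs_of_nonneg (by positivity)]
    _ ≤ tanh ((d * β + β) / 2) := one_sub_one_div_cosh_le_tanh_half (by positivity)

end CorrelationBounds

/-- **Correlation bounds on the path graph via the simple random walk on ℤ.**
For vertices `x < y` of `PG_n` at distance `d = y - x` and any `q > 0`:
for every `m`, `U_q(x,y) ≤ 1 - P(|S_m| > d)(2/(2+q))^m`, and for every `m` with
`P(|S_m| < d/2) ≥ 1/2`, `U_q(x,y) ≥ (1-(2/(2+q))^m)² (2 P(|S_m| < d/2) - 1)²`. -/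
theorem path_two_point_rw_bounds (n x y : ℕ) (hx : 1 ≤ x) (hxy : x < y) (hy : y ≤ n)
    (q : ℝ) (hq : 0 < q) :
    (∀ m : ℕ,
      Ucorr (pathAdj n) (fun _ _ => (1 : ℝ)) q ⟨x - 1, by omega⟩ ⟨y - 1, by omega⟩ ≤
        1 - srwProb m (fun z => ((y - x : ℕ) : ℤ) < |z|) * (2 / (2 + q)) ^ m) ∧
    (∀ m : ℕ, (1 : ℝ) / 2 ≤ srwProb m (fun z => 2 * |z| < ((y - x : ℕ) : ℤ)) →
      (1 - (2 / (2 + q)) ^ m) ^ 2 *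
          (2 * srwProb m (fun z => 2 * |z| < ((y - x : ℕ) : ℤ)) - 1) ^ 2 ≤
        Ucorr (pathAdj n) (fun _ _ => (1 : ℝ)) q ⟨x - 1, by omega⟩ ⟨y - 1, by omega⟩) := by
  obtain ⟨a, rfl⟩ : ∃ a, x = a + 1 := ⟨x - 1, by omega⟩
  obtain ⟨d, rfl⟩ : ∃ d, y = a + d + 1 := ⟨y - 1 - a, by omega⟩
  obtain ⟨k, rfl⟩ : ∃ k, n = a + d + k + 1 := ⟨n - (a + d + 1), by omega⟩
  obtain ⟨β, hβ, rfl⟩ := exists_pos_eq_four_mul_sinh_sq hq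
  have hdist : a + d + 1 - (a + 1) = d := by omega
  have hcosh := Real.one_le_cosh (2 * β)
  simp only [hdist, two_div_two_add_four_mul_sinh_sq, Nat.add_sub_cancel]
  refine ⟨fun m => (Ucorr_pathAdj_le hβ a d k).trans (sub_le_sub_left ?_ 1), fun m hm => ?_⟩
  · rw [one_div_pow, mul_one_div, div_le_iff₀' (by positivity)]
    exact srwProb_lt_abs_le m d (2 * β)
  · have hpow : (1 / Real.cosh (2 * β)) ^ m ≤ 1 :=
      pow_le_one₀ (by positivity) ((div_le_one (by positivity)).2 hcosh)
    rw [← mul_pow]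
    refine (pow_le_pow_left₀ (mul_nonneg ?_ ?_) ?_ 2).trans
      (tanh_sq_le_Ucorr_pathAdj hβ (by omega) a k)
    · exact sub_nonneg.2 hpow
    · linarith
    · exact one_sub_pow_mul_srwProb_le_tanh hβ.le m d

end
end
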